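/- arXiv:0705.3925 — 2 statements merged into one kernel-verified Lean document; each statement's English description precedes it below -/
import Mathlib

section
/- The dual Cauchy identity: ∏_{i=1}^m ∏_{j=1}^n (1 + a_i b_j) = Σ_{μ : μ_1 ≤ m} s_{μ'}(a_1,…,a_m) s_μ(b_1,…,b_n), where the sum is over partitions μ with largest part at most m (equivalently, at most n parts and μ_1 ≤ m), and μ' denotes the conjugate partition. -/
open Finset

/-- The complete homogeneous symmetric polynomial `h_k` in `n` variables, evaluated at `x`. -/
def hpoly {R : Type*} [CommRing R] (n k : ℕ) (x : Fin n → R) : R :=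
  ∑ d ∈ Finset.Nat.antidiagonalTuple n k, ∏ i, x i ^ d i

/-- `h_k` extended to integer index: zero for negative `k`. -/
def hpolyZ {R : Type*} [CommRing R] (n : ℕ) (k : ℤ) (x : Fin n → R) : R :=
  if 0 ≤ k then hpoly n k.toNat x else 0

/-- The Schur polynomial `s_μ(x_1,…,x_n)` of a partition `μ` with at most `n` parts,
via the Jacobi–Trudi determinant `det[h_{μ_i - i + j}]_{i,j=1..n}`. -/
def schur {R : Type*} [CommRing R] (n : ℕ) (μ : Fin n → ℕ) (x : Fin n → R) : R :=
  Matrix.det (Matrix.of fun i j : Fin n =>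
    hpolyZ n ((μ i : ℤ) - ((i : ℕ) : ℤ) + ((j : ℕ) : ℤ)) x)

/-- The conjugate (transpose) partition, with `m` slots: `μ'_j = #{i : μ_i > j}`. -/
def conjPartition {n : ℕ} (m : ℕ) (μ : Fin n → ℕ) : Fin m → ℕ :=
  fun j => ((Finset.univ : Finset (Fin n)).filter (fun i => (j : ℕ) < μ i)).card

/-- The coefficient of a power series at an integer index, zero at negative indices. -/
noncomputable def coeffZ {R : Type*} [CommRing R] (f : PowerSeries R) (k : ℤ) : R :=
  if 0 ≤ k then PowerSeries.coeff k.toNat f else 0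

/-- The generating function of the complete homogeneous symmetric polynomials. -/
noncomputable def hseries {R : Type*} [CommRing R] {n : ℕ} (x : Fin n → R) : PowerSeries R :=
  PowerSeries.mk fun k => hpoly n k x

/-- The generating polynomial of the elementary symmetric polynomials. -/
noncomputable def epoly {R : Type*} [CommRing R] {n : ℕ} (x : Fin n → R) : Polynomial R :=
  ∏ i, (1 + Polynomial.C (x i) * Polynomial.X)

section CoeffZ

variable {R : Type*} [CommRing R]

lemma coeffZ_hseries {n : ℕ} (x : Fin n → R) (k : ℤ) : coeffZ (hseries x) k = hpolyZ n k x := by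
  simp [coeffZ, hseries, hpolyZ]

lemma coeffZ_of_neg (f : PowerSeries R) {k : ℤ} (hk : k < 0) : coeffZ f k = 0 :=
  if_neg hk.not_ge

lemma coeffZ_natCast (f : PowerSeries R) (k : ℕ) : coeffZ f k = PowerSeries.coeff k f := by
  simp [coeffZ]

lemma sum_coeffZ_mul_coeffZ (f g : PowerSeries R) (N i j : ℕ)
    (h : ∀ k, j + k ≤ i → N ≤ j + k → PowerSeries.coeff k g = 0) :
    ∑ c : Fin N, coeffZ f ((i : ℤ) - (c : ℕ)) * coeffZ g (((c : ℕ) : ℤ) - j) =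
      coeffZ (f * g) ((i : ℤ) - j) := by
  rcases lt_or_ge i j with hij | hij
  · rw [coeffZ_of_neg _ (by omega)]
    refine Finset.sum_eq_zero fun c _ => ?_
    rcases lt_or_ge (c : ℕ) j with hc | hc
    · rw [coeffZ_of_neg g (by omega), mul_zero]
    · rw [coeffZ_of_neg f (by omega), zero_mul]
  · obtain ⟨d, rfl⟩ := Nat.exists_eq_add_of_le hij
    have hd : ((j + d : ℕ) : ℤ) - j = (d : ℕ) := by push_cast; ring
    rw [hd, coeffZ_natCast, PowerSeries.coeff_mul,
      Fin.sum_univ_eq_sum_range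
        (fun c => coeffZ f (((j + d : ℕ) : ℤ) - (c : ℕ)) * coeffZ g ((c : ℤ) - j)) N,
      ← Finset.sum_filter_add_sum_filter_not (Finset.HasAntidiagonal.antidiagonal d) (fun p => j + p.2 < N)]
    rw [Finset.sum_eq_zero (s := (Finset.HasAntidiagonal.antidiagonal d).filter (fun p => ¬ j + p.2 < N)), add_zero]
    · symm
      refine Finset.sum_of_injOn (fun p => j + p.2) ?_ ?_ ?_ ?_
      · rintro ⟨a, b⟩ hp ⟨a', b'⟩ hp' hh
        simp only [Finset.coe_filter, Finset.HasAntidiagonal.mem_antidiagonal, Set.mem_ofPred_eq] at hp hp' hh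
        ext <;> simp <;> omega
      · rintro ⟨a, b⟩ hp
        simp only [Finset.coe_filter, Finset.HasAntidiagonal.mem_antidiagonal, Set.mem_ofPred_eq] at hp
        simpa using hp.2
      · intro c hc hc'
        rcases lt_or_ge c j with h1 | h1
        · rw [coeffZ_of_neg g (by omega), mul_zero]
        · rcases lt_or_ge (j + d) c with h2 | h2
          · rw [coeffZ_of_neg f (by omega), zero_mul]
          · refine absurd ⟨(j + d - c, c - j), ?_, ?_⟩ hc'
            · simp only [Finset.coe_filter, Finset.HasAntidiagonal.mem_antidiagonal, Set.mem_ofPred_eq]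
              simp only [Finset.mem_range] at hc
              omega
            · simp only; omega
      · rintro ⟨a, b⟩ hp
        simp only [Finset.mem_filter, Finset.HasAntidiagonal.mem_antidiagonal] at hp
        rw [show ((j + d : ℕ) : ℤ) - (j + b : ℕ) = (a : ℕ) by omega,
          show ((j + b : ℕ) : ℤ) - j = (b : ℕ) by omega, coeffZ_natCast, coeffZ_natCast]
    · rintro ⟨a, b⟩ hp
      simp only [Finset.mem_filter, Finset.HasAntidiagonal.mem_antidiagonal] at hp
      rw [h b (by omega) (by omega), mul_zero]

lemma mk_pow_mul_one_sub (x : R) :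
    (PowerSeries.mk fun k => x ^ k) * (1 - PowerSeries.C x * PowerSeries.X) = 1 := by
  ext k
  cases k with
  | zero => simp [mul_sub]
  | succ k =>
    rw [mul_sub, mul_one, ← mul_assoc, mul_comm _ (PowerSeries.C x), mul_assoc, map_sub,
      PowerSeries.coeff_C_mul, PowerSeries.coeff_succ_mul_X]
    simp [pow_succ', PowerSeries.coeff_one]

lemma hseries_eq_prod {n : ℕ} (x : Fin n → R) :
    hseries x = ∏ i, PowerSeries.mk fun k => x i ^ k := by
  ext k
  rw [PowerSeries.coeff_prod, hseries, PowerSeries.coeff_mk, hpoly]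
  symm
  refine Finset.sum_nbij' (fun l => ⇑l) (fun d => Finsupp.equivFunOnFinite.symm d) ?_ ?_ ?_ ?_ ?_
  · intro l hl
    simpa [Finset.Nat.mem_antidiagonalTuple] using hl
  · intro d hd
    simpa [Finset.Nat.mem_antidiagonalTuple] using hd
  · intro l _
    ext; simp
  · intro d _
    ext; simp
  · intro l _
    simp

lemma hseries_mul_prod {n : ℕ} (x : Fin n → R) :
    hseries x * ∏ i, (1 - PowerSeries.C (x i) * PowerSeries.X) = 1 := by
  rw [hseries_eq_prod, ← Finset.prod_mul_distrib]
  exact Finset.prod_eq_one fun i _ => mk_pow_mul_one_sub (x i)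

lemma coe_epoly {n : ℕ} (x : Fin n → R) :
    (epoly x : PowerSeries R) = ∏ i, (1 + PowerSeries.C (x i) * PowerSeries.X) := by
  rw [epoly, ← Polynomial.coeToPowerSeries.ringHom_apply, map_prod]
  simp

lemma epoly_mul_hseries_neg {n : ℕ} (x : Fin n → R) :
    (epoly x : PowerSeries R) * hseries (-x) = 1 := by
  rw [mul_comm, coe_epoly]
  simpa using hseries_mul_prod (-x)

lemma natDegree_prod_one_add_le {ι : Type*} (s : Finset ι) (x : ι → R) :
    (∏ i ∈ s, (1 + Polynomial.C (x i) * Polynomial.X)).natDegree ≤ s.card := by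
  refine (Polynomial.natDegree_prod_le _ _).trans ?_
  rw [Finset.card_eq_sum_ones]
  refine Finset.sum_le_sum fun i _ => ?_
  compute_degree

lemma eval_epoly {n : ℕ} (x : Fin n → R) (y : R) :
    (epoly x).eval y = ∏ i, (1 + x i * y) := by
  simp [epoly, Polynomial.eval_prod]

lemma hpoly_neg {n : ℕ} (k : ℕ) (x : Fin n → R) : hpoly n k (-x) = (-1) ^ k * hpoly n k x := by
  simp only [hpoly, Finset.mul_sum]
  refine Finset.sum_congr rfl fun d hd => ?_
  rw [Finset.Nat.mem_antidiagonalTuple] at hd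
  rw [← hd, ← Finset.prod_pow_eq_pow_sum, ← Finset.prod_mul_distrib]
  exact Finset.prod_congr rfl fun i _ => by rw [Pi.neg_apply, neg_pow]

/-- The lower triangular Toeplitz matrix of a power series. -/
noncomputable def toeplitz (N : ℕ) (f : PowerSeries R) : Matrix (Fin N) (Fin N) R :=
  Matrix.of fun i j => coeffZ f (((i : ℕ) : ℤ) - (j : ℕ))

lemma toeplitz_mul (N : ℕ) (f g : PowerSeries R) :
    toeplitz N f * toeplitz N g = toeplitz N (f * g) := by
  ext i j
  simp only [toeplitz, Matrix.mul_apply, Matrix.of_apply]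
  exact sum_coeffZ_mul_coeffZ f g N i j fun k _ _ => by omega

lemma toeplitz_one (N : ℕ) : toeplitz N (1 : PowerSeries R) = 1 := by
  ext i j
  simp only [toeplitz, Matrix.of_apply, coeffZ, PowerSeries.coeff_one, Matrix.one_apply, Fin.ext_iff]
  split_ifs <;> first | rfl | omega

lemma det_toeplitz (N : ℕ) {f : PowerSeries R} (hf : PowerSeries.coeff 0 f = 1) :
    (toeplitz N f).det = 1 := by
  rw [Matrix.det_of_isLowerTriangular]
  · refine Finset.prod_eq_one fun i _ => ?_
    simpa [toeplitz, coeffZ] using hf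
  · intro i j hij
    have : (i : ℕ) < j := by simpa using hij
    exact coeffZ_of_neg _ (by omega)

end CoeffZ

namespace Matrix

variable {R : Type*} [CommRing R]

lemma det_mul_eq_sum_prod_mul_det {n κ : Type*} [Fintype n] [DecidableEq n] [Fintype κ]
    [DecidableEq κ] (A : Matrix n κ R) (B : Matrix κ n R) :
    (A * B).det = ∑ f : n → κ, (∏ i, A i (f i)) * (B.submatrix f id).det := by
  have h : A * B = fun i => ∑ c, A i c • B c := by
    ext i j
    simp [mul_apply, Finset.sum_apply]
  rw [h]
  refine ((detRowAlternating : (n → R) [⋀^n]→ₗ[R] R).toMultilinearMap.map_sum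
    (fun i c => A i c • B c)).trans ?_
  refine Finset.sum_congr rfl fun f _ => ?_
  exact (detRowAlternating : (n → R) [⋀^n]→ₗ[R] R).toMultilinearMap.map_smul_univ _ _

/-- The **Cauchy–Binet formula**. -/
lemma det_mul_eq_sum_strictMono {n : ℕ} {κ : Type*} [Fintype κ] [LinearOrder κ]
    [DecidablePred (StrictMono : (Fin n → κ) → Prop)]
    (A : Matrix (Fin n) κ R) (B : Matrix κ (Fin n) R) :
    (A * B).det = ∑ p : Fin n → κ with StrictMono p,
      (A.submatrix id p).det * (B.submatrix p id).det := by
  classical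
  rw [det_mul_eq_sum_prod_mul_det]
  have h0 : ∀ f : Fin n → κ, (∏ i, A i (f i)) * (B.submatrix f id).det ≠ 0 →
      Function.Injective f := by
    intro f hf i j hij
    by_contra hne
    refine hf ?_
    rw [det_zero_of_row_eq hne (by ext; simp [hij]), mul_zero]
  rw [← Finset.sum_filter_of_ne fun f _ => h0 f]
  have h1 : ∀ p : Fin n → κ, (A.submatrix id p).det * (B.submatrix p id).det =
      ∑ σ : Equiv.Perm (Fin n), (∏ i, A i (p (σ i))) * (B.submatrix (p ∘ σ) id).det := by
    intro p
    rw [← det_transpose, det_apply', Finset.sum_mul]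
    refine Finset.sum_congr rfl fun σ _ => ?_
    have : B.submatrix (p ∘ σ) id = (B.submatrix p id).submatrix σ id := rfl
    rw [this, det_permute]
    simp only [transpose_apply, submatrix_apply, id]
    ring
  simp_rw [h1]
  rw [← Finset.sum_product']
  symm
  refine Finset.sum_nbij' (fun x => x.1 ∘ x.2) (fun f => (f ∘ Tuple.sort f, (Tuple.sort f)⁻¹))
    ?_ ?_ ?_ ?_ ?_
  · rintro ⟨p, σ⟩ hp
    simp only [Finset.mem_product, Finset.mem_filter, Finset.mem_univ, true_and, and_true] at hp ⊢
    exact hp.injective.comp σ.injective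
  · intro f hf
    simp only [Finset.mem_product, Finset.mem_filter, Finset.mem_univ, true_and, and_true] at hf ⊢
    exact (Tuple.monotone_sort f).strictMono_of_injective (hf.comp (Tuple.sort f).injective)
  · rintro ⟨p, σ⟩ hp
    simp only [Finset.mem_product, Finset.mem_filter, Finset.mem_univ, true_and, and_true] at hp
    have h2 : (p ∘ σ) ∘ Tuple.sort (p ∘ σ) = p := by
      rw [Tuple.comp_perm_comp_sort_eq_comp_sort, Tuple.sort_eq_refl_iff_monotone.2 hp.monotone]
      rfl
    refine Prod.ext h2 ?_
    refine inv_eq_of_mul_eq_one_left (Equiv.ext fun i => hp.injective ?_)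
    exact congrFun h2 i
  · intro f _
    ext i
    simp
  · rintro ⟨p, σ⟩ _
    rfl

/-- **Jacobi's complementary minor formula**, for block matrices. -/
lemma det_toBlocks₁₁_eq_of_mul_eq_one {m n : Type*} [Fintype m] [Fintype n] [DecidableEq m]
    [DecidableEq n] {A B : Matrix (n ⊕ m) (n ⊕ m) R} (h : A * B = 1) :
    A.toBlocks₁₁.det = A.det * B.toBlocks₂₂.det := by
  have hB : A * fromBlocks 1 B.toBlocks₁₂ 0 B.toBlocks₂₂ =
      fromBlocks A.toBlocks₁₁ 0 A.toBlocks₂₁ 1 := by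
    rw [← fromBlocks_toBlocks A, ← fromBlocks_toBlocks B, fromBlocks_multiply,
      ← fromBlocks_one, fromBlocks_inj] at h
    conv_lhs => rw [← fromBlocks_toBlocks A]
    rw [fromBlocks_multiply]
    simp [h.2.1, h.2.2.2]
  have := congrArg det hB
  rw [det_mul, det_fromBlocks_zero₂₁, det_fromBlocks_zero₁₂] at this
  simpa using this.symm

end Matrix

lemma Equiv.Perm.sign_eq_prod_of_strictMono {n m : ℕ} (σ : Equiv.Perm (Fin (n + m)))
    (h₁ : StrictMono fun l : Fin n => σ (Fin.castAdd m l))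
    (h₂ : StrictMono fun j : Fin m => σ (Fin.natAdd n j)) :
    Equiv.Perm.sign σ =
      ∏ j : Fin m, ∏ l : Fin n, if σ (Fin.castAdd m l) < σ (Fin.natAdd n j) then 1 else -1 := by
  have h (i : Fin (n + m)) : ∏ j ∈ Finset.Ioi i, (if σ i < σ j then 1 else -1 : ℤˣ) =
      ∏ j, if i < j then (if σ i < σ j then 1 else -1 : ℤˣ) else 1 := by
    rw [← Finset.prod_filter]
    congr 1
    ext; simp
  rw [σ.sign_eq_prod_prod_Ioi]
  simp_rw [h]
  simp_rw [Fin.prod_univ_add, Finset.prod_mul_distrib]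
  have e₁ : ∏ i : Fin n, ∏ j : Fin n, (if Fin.castAdd m i < Fin.castAdd m j then
      (if σ (Fin.castAdd m i) < σ (Fin.castAdd m j) then 1 else -1 : ℤˣ) else 1) = 1 := by
    refine Finset.prod_eq_one fun i _ => Finset.prod_eq_one fun j _ => ?_
    split_ifs with h3 h4
    · rfl
    · exact absurd (h₁ (show i < j from h3)) h4
    · rfl
  have e₂ : ∏ i : Fin m, ∏ j : Fin n, (if Fin.natAdd n i < Fin.castAdd m j then
      (if σ (Fin.natAdd n i) < σ (Fin.castAdd m j) then 1 else -1 : ℤˣ) else 1) = 1 := by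
    refine Finset.prod_eq_one fun i _ => Finset.prod_eq_one fun j _ => ?_
    rw [if_neg]
    simp only [Fin.lt_def, Fin.val_natAdd, Fin.val_castAdd]
    omega
  have e₃ : ∏ i : Fin m, ∏ j : Fin m, (if Fin.natAdd n i < Fin.natAdd n j then
      (if σ (Fin.natAdd n i) < σ (Fin.natAdd n j) then 1 else -1 : ℤˣ) else 1) = 1 := by
    refine Finset.prod_eq_one fun i _ => Finset.prod_eq_one fun j _ => ?_
    split_ifs with h3 h4
    · rfl
    · exact absurd (h₂ (by simpa using h3)) h4
    · rfl
  rw [e₁, e₂, e₃, one_mul, one_mul, mul_one, Finset.prod_comm]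
  refine Finset.prod_congr rfl fun j _ => Finset.prod_congr rfl fun l _ => ?_
  rw [if_pos]
  simp only [Fin.lt_def, Fin.val_natAdd, Fin.val_castAdd]
  omega

section Conjugate

variable {n m : ℕ} {μ : Fin n → ℕ}

lemma conjPartition_le (j : Fin m) : conjPartition m μ j ≤ n :=
  (Finset.card_filter_le _ _).trans (by simp)

lemma lt_conjPartition_iff (hμ : Antitone μ) (i : Fin n) (j : Fin m) :
    (i : ℕ) < conjPartition m μ j ↔ (j : ℕ) < μ i :=
  Tuple.lt_card_gt_iff_apply_gt_of_antitone hμ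

lemma conjPartition_antitone : Antitone (conjPartition m μ) := fun i j hij =>
  Finset.card_le_card fun l => by
    have : (i : ℕ) ≤ j := hij
    simp only [Finset.mem_filter, Finset.mem_univ, true_and]
    omega

/-- The permutation listing first, in increasing order, the vertical steps of the boundary path of
a partition `μ` in the `n × m` box, and then, in increasing order, its horizontal steps. -/
lemma exists_boundary_perm (hμ : Antitone μ) (hm : ∀ i, μ i ≤ m) :
    ∃ σ : Equiv.Perm (Fin (n + m)),
      (∀ l : Fin n, (σ (Fin.castAdd m l) : ℕ) = μ l.rev + l) ∧
      ∀ j : Fin m, (σ (Fin.natAdd n j) : ℕ) + conjPartition m μ j = n + j := by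
  let p (l : Fin n) : Fin (n + m) := ⟨μ l.rev + l, by have := hm l.rev; omega⟩
  let q (j : Fin m) : Fin (n + m) := ⟨n + j - conjPartition m μ j, by omega⟩
  have hp : StrictMono p := fun l l' h => by
    have h1 : μ l.rev ≤ μ l'.rev := hμ (Fin.rev_le_rev.2 h.le)
    have h2 : (l : ℕ) < l' := h
    simp only [p, Fin.lt_def]
    omega
  have hq : StrictMono q := fun j j' h => by
    have h1 : conjPartition m μ j' ≤ conjPartition m μ j := conjPartition_antitone h.le
    have h2 : (j : ℕ) < j' := h
    have h3 : conjPartition m μ j ≤ n := conjPartition_le j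
    simp only [q, Fin.lt_def]
    omega
  have hpq (l : Fin n) (j : Fin m) : p l ≠ q j := fun h => by
    have h1 := lt_conjPartition_iff hμ l.rev j
    have h2 : conjPartition m μ j ≤ n := conjPartition_le j
    simp only [p, q, Fin.ext_iff, Fin.val_rev] at h h1
    omega
  have hinj : Function.Injective (Fin.addCases p q : Fin (n + m) → Fin (n + m)) := by
    intro x y
    induction x using Fin.addCases <;> induction y using Fin.addCases <;>
      simp only [Fin.addCases_left, Fin.addCases_right]
    · exact fun h => congrArg _ (hp.injective h)
    · exact fun h => absurd h (hpq _ _)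
    · exact fun h => absurd h.symm (hpq _ _)
    · exact fun h => congrArg _ (hq.injective h)
  refine ⟨Equiv.ofBijective _ (Finite.injective_iff_bijective.1 hinj), fun l => ?_, fun j => ?_⟩
  · simp [p]
  · have h2 : conjPartition m μ j ≤ n := conjPartition_le j
    simp only [Equiv.ofBijective_apply, Fin.addCases_right, q]
    omega

lemma sign_boundary_perm (hμ : Antitone μ) (σ : Equiv.Perm (Fin (n + m)))
    (h₁ : ∀ l : Fin n, (σ (Fin.castAdd m l) : ℕ) = μ l.rev + l)
    (h₂ : ∀ j : Fin m, (σ (Fin.natAdd n j) : ℕ) + conjPartition m μ j = n + j) :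
    Equiv.Perm.sign σ = ∏ j : Fin m, (-1) ^ conjPartition m μ j := by
  rw [Equiv.Perm.sign_eq_prod_of_strictMono]
  · refine Finset.prod_congr rfl fun j _ => ?_
    have h (l : Fin n) : σ (Fin.castAdd m l) < σ (Fin.natAdd n j) ↔ ¬ (j : ℕ) < μ l.rev := by
      rw [← lt_conjPartition_iff hμ l.rev j, Fin.lt_def, h₁, Fin.val_rev]
      have h3 := h₂ j
      have h4 := lt_conjPartition_iff hμ l.rev j
      rw [Fin.val_rev] at h4
      omega
    simp_rw [h]
    refine (Equiv.prod_comp Fin.revPerm fun l => if ¬ (j : ℕ) < μ l then (1 : ℤˣ) else -1).trans ?_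
    simp [Finset.prod_ite, conjPartition]
  · intro l l' h
    have h3 : μ l.rev ≤ μ l'.rev := hμ (Fin.rev_le_rev.2 h.le)
    have h4 : (l : ℕ) < l' := h
    simp only [Fin.lt_def, h₁]
    omega
  · intro j j' h
    have h3 : conjPartition m μ j' ≤ conjPartition m μ j := conjPartition_antitone h.le
    have h4 : (j : ℕ) < j' := h
    have := h₂ j
    have := h₂ j'
    simp only [Fin.lt_def]
    omega

end Conjugate

section DualJacobiTrudi

variable {R : Type*} [CommRing R]

lemma hpolyZ_neg {n : ℕ} {k : ℤ} {e : ℕ} (h : Even (k - e)) (x : Fin n → R) :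
    hpolyZ n k (-x) = (-1) ^ e * hpolyZ n k x := by
  rcases lt_or_ge k 0 with hk | hk
  · simp [hpolyZ, hk.not_ge]
  · lift k to ℕ using hk
    rw [hpolyZ, hpolyZ, if_pos (by omega), if_pos (by omega), Int.toNat_natCast, hpoly_neg]
    congr 1
    refine neg_one_pow_congr ?_
    rw [Int.even_sub] at h
    exact_mod_cast h

lemma det_hpolyZ_neg {m : ℕ} (ν : Fin m → ℕ) (a : Fin m → R) :
    (Matrix.of fun i j : Fin m => hpolyZ m ((ν j : ℤ) - (j : ℕ) + (i : ℕ)) (-a)).det =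
      (∏ j, (-1) ^ ν j) * schur m ν a := by
  have h : (Matrix.of fun i j : Fin m => hpolyZ m ((ν j : ℤ) - (j : ℕ) + (i : ℕ)) (-a)) =
      Matrix.of fun i j : Fin m => (-1) ^ (i : ℕ) * (Matrix.of fun i j : Fin m =>
        (-1) ^ (ν j + j) * (Matrix.of fun i j : Fin m =>
          hpolyZ m ((ν i : ℤ) - (i : ℕ) + (j : ℕ)) a).transpose i j) i j := by
    ext i j
    simp only [Matrix.of_apply, Matrix.transpose_apply]
    rw [← mul_assoc, ← pow_add]
    refine hpolyZ_neg ⟨-(j : ℕ), ?_⟩ a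
    push_cast
    ring
  rw [h, Matrix.det_mul_column, Matrix.det_mul_row, Matrix.det_transpose, ← mul_assoc,
    ← Finset.prod_mul_distrib, schur]
  congr 1
  refine Finset.prod_congr rfl fun j _ => ?_
  rw [pow_add, mul_left_comm, ← pow_add, ← two_mul, pow_mul]
  simp

/-- The dual Jacobi–Trudi (Nägelsbach–Kostka) formula. -/
lemma schur_conjPartition {n m : ℕ} {μ : Fin n → ℕ} (hμ : Antitone μ) (hm : ∀ i, μ i ≤ m)
    (a : Fin m → R) :
    schur m (conjPartition m μ) a = (Matrix.of fun l i : Fin n =>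
      coeffZ (epoly a : PowerSeries R) (((μ l.rev + l : ℕ) : ℤ) - (i : ℕ))).det := by
  obtain ⟨σ, h₁, h₂⟩ := exists_boundary_perm hμ hm
  let s := finSumFinEquiv (m := n) (n := m)
  let E := toeplitz (n + m) (epoly a : PowerSeries R)
  let H := toeplitz (n + m) (hseries (-a))
  have hEH : E * H = 1 := by rw [toeplitz_mul, epoly_mul_hseries_neg, toeplitz_one]
  have hdetE : E.det = 1 := by
    refine det_toeplitz _ ?_
    rw [Polynomial.coeff_coe, Polynomial.coeff_zero_eq_eval_zero, eval_epoly]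
    simp
  have hAB : (E.submatrix (s.trans σ) s) * (H.submatrix s (s.trans σ)) = 1 := by
    rw [Matrix.submatrix_mul_equiv, hEH, Matrix.submatrix_one_equiv]
  have key := Matrix.det_toBlocks₁₁_eq_of_mul_eq_one hAB
  have hA : (E.submatrix (s.trans σ) s).det = ∏ j : Fin m, (-1) ^ conjPartition m μ j := by
    have : E.submatrix (s.trans σ) s = (E.submatrix σ id).submatrix s s := rfl
    rw [this, Matrix.det_submatrix_equiv_self, Matrix.det_permute, hdetE, mul_one,
      sign_boundary_perm hμ σ h₁ h₂]
    simp
  have hB : (H.submatrix s (s.trans σ)).toBlocks₂₂ = Matrix.of fun i j : Fin m =>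
      hpolyZ m ((conjPartition m μ j : ℤ) - (j : ℕ) + (i : ℕ)) (-a) := by
    ext i j
    simp only [Matrix.toBlocks₂₂, Matrix.of_apply, Matrix.submatrix_apply, H, toeplitz, s,
      Equiv.trans_apply, finSumFinEquiv_apply_right, coeffZ_hseries, Fin.val_natAdd]
    congr 1
    have := h₂ j
    omega
  have hA' : (E.submatrix (s.trans σ) s).toBlocks₁₁ = Matrix.of fun l i : Fin n =>
      coeffZ (epoly a : PowerSeries R) (((μ l.rev + l : ℕ) : ℤ) - (i : ℕ)) := by
    ext l i
    simp only [Matrix.toBlocks₁₁, Matrix.of_apply, Matrix.submatrix_apply, E, toeplitz, s,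
      Equiv.trans_apply, finSumFinEquiv_apply_left, Fin.val_castAdd, h₁]
  rw [← hA', key, hA, hB, det_hpolyZ_neg, ← mul_assoc, ← Finset.prod_mul_distrib]
  simp [← pow_add, ← two_mul]

end DualJacobiTrudi

section Cauchy

variable {R : Type*} [CommRing R]

lemma schur_eq_det_rev {n : ℕ} (μ : Fin n → ℕ) (b : Fin n → R) :
    schur n μ b = (Matrix.of fun i l : Fin n =>
      coeffZ (hseries b) (((μ l.rev + l : ℕ) : ℤ) - (i : ℕ))).det := by
  rw [schur, ← Matrix.det_submatrix_equiv_self Fin.revPerm, ← Matrix.det_transpose]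
  congr 1
  ext i l
  simp only [Matrix.transpose_apply, Matrix.submatrix_apply, Matrix.of_apply, Fin.revPerm_apply,
    coeffZ_hseries, Fin.val_rev]
  congr 1
  omega

lemma sum_coeffZ_epoly {m n : ℕ} (a : Fin m → R) (y : R) (r : Fin n) :
    ∑ c : Fin (n + m), y ^ (c : ℕ) *
      coeffZ (epoly a : PowerSeries R) (((c : ℕ) : ℤ) - (r : ℕ)) =
      (∏ i, (1 + a i * y)) * y ^ (r : ℕ) := by
  have hdeg : (epoly a * Polynomial.X ^ (r : ℕ)).natDegree < n + m := by
    have h1 : (epoly a).natDegree ≤ m := by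
      simpa [epoly] using natDegree_prod_one_add_le Finset.univ a
    have h2 := Polynomial.natDegree_mul_le (p := epoly a) (q := Polynomial.X ^ (r : ℕ))
    have h3 := Polynomial.natDegree_X_pow_le (R := R) (r : ℕ)
    omega
  have h := Polynomial.eval_eq_sum_range' hdeg y
  rw [Polynomial.eval_mul, Polynomial.eval_pow, Polynomial.eval_X, eval_epoly] at h
  refine Eq.trans ?_ ((Fin.sum_univ_eq_sum_range
    (fun c : ℕ => (epoly a * Polynomial.X ^ (r : ℕ)).coeff c * y ^ c) (n + m)).trans h.symm)
  refine Finset.sum_congr rfl fun c _ => ?_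
  rw [mul_comm, Polynomial.coeff_mul_X_pow']
  congr 1
  split_ifs with hc
  · rw [show ((c : ℕ) : ℤ) - (r : ℕ) = ((c - r : ℕ) : ℕ) by omega, coeffZ_natCast,
      Polynomial.coeff_coe]
  · exact coeffZ_of_neg _ (by omega)

lemma prod_erase_mul_hseries {n : ℕ} (b : Fin n → R) (j : Fin n) :
    hseries b * ((∏ i ∈ Finset.univ.erase j, (1 + Polynomial.C (-b i) * Polynomial.X) :
      Polynomial R) : PowerSeries R) = PowerSeries.mk fun k => b j ^ k := by
  have h := hseries_mul_prod b
  rw [← Finset.mul_prod_erase _ _ (Finset.mem_univ j)] at h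
  have hc : ((∏ i ∈ Finset.univ.erase j, (1 + Polynomial.C (-b i) * Polynomial.X) :
      Polynomial R) : PowerSeries R) =
      ∏ i ∈ Finset.univ.erase j, (1 - PowerSeries.C (b i) * PowerSeries.X) := by
    rw [← Polynomial.coeToPowerSeries.ringHom_apply, map_prod]
    simp [sub_eq_add_neg]
  rw [hc]
  linear_combination (PowerSeries.mk fun k => b j ^ k) * h -
    (hseries b * ∏ i ∈ Finset.univ.erase j, (1 - PowerSeries.C (b i) * PowerSeries.X)) *
      mk_pow_mul_one_sub (b j)

lemma exists_mul_eq_pow {n : ℕ} (b : Fin n → R) : ∃ M : Matrix (Fin n) (Fin n) R,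
    ∀ (j : Fin n) (c : ℕ),
      ∑ r, M j r * coeffZ (hseries b) ((c : ℤ) - (r : ℕ)) = b j ^ c := by
  let g (j : Fin n) : Polynomial R :=
    ∏ i ∈ Finset.univ.erase j, (1 + Polynomial.C (-b i) * Polynomial.X)
  refine ⟨Matrix.of fun j r => (g j).coeff r, fun j c => ?_⟩
  have h := sum_coeffZ_mul_coeffZ (hseries b) (g j : PowerSeries R) n c 0 fun k _ hk => by
    rw [Polynomial.coeff_coe]
    refine Polynomial.coeff_eq_zero_of_natDegree_lt ?_
    have h1 := natDegree_prod_one_add_le (Finset.univ.erase j) fun i => -b i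
    rw [Finset.card_erase_of_mem (Finset.mem_univ j), Finset.card_univ, Fintype.card_fin] at h1
    have := j.pos
    simp only [g]
    omega
  rw [prod_erase_mul_hseries, Nat.cast_zero, sub_zero, coeffZ_natCast, PowerSeries.coeff_mk] at h
  rw [← h]
  refine Finset.sum_congr rfl fun r _ => ?_
  rw [sub_zero, coeffZ_natCast, Polynomial.coeff_coe, mul_comm, Matrix.of_apply]

lemma det_hseries_mul_epoly [IsDomain R] {m n : ℕ} (a : Fin m → R) {b : Fin n → R}
    (hb : Function.Injective b) :
    ((Matrix.of fun (r : Fin n) (c : Fin (n + m)) =>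
        coeffZ (hseries b) (((c : ℕ) : ℤ) - (r : ℕ))) *
      (Matrix.of fun (c : Fin (n + m)) (r : Fin n) =>
        coeffZ (epoly a : PowerSeries R) (((c : ℕ) : ℤ) - (r : ℕ)))).det =
      ∏ i, ∏ j, (1 + a i * b j) := by
  obtain ⟨M, hM⟩ := exists_mul_eq_pow b
  have hV : M * (toeplitz n (hseries b)).transpose = Matrix.vandermonde b := by
    ext j c
    simpa [Matrix.mul_apply, toeplitz] using hM j c
  have hdet : M.det = (Matrix.vandermonde b).det := by
    rw [← hV, Matrix.det_mul, Matrix.det_transpose, det_toeplitz, mul_one]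
    simp [hseries_eq_prod]
  have hP : M * (Matrix.of fun (r : Fin n) (c : Fin (n + m)) =>
      coeffZ (hseries b) (((c : ℕ) : ℤ) - (r : ℕ))) = Matrix.of fun j (c : Fin (n + m)) => b j ^ (c : ℕ) := by
    ext j c
    simpa [Matrix.mul_apply] using hM j c
  have hE : (Matrix.of fun (j : Fin n) (c : Fin (n + m)) => b j ^ (c : ℕ)) *
      (Matrix.of fun (c : Fin (n + m)) (r : Fin n) =>
        coeffZ (epoly a : PowerSeries R) (((c : ℕ) : ℤ) - (r : ℕ))) =
      Matrix.of fun j r => (∏ i, (1 + a i * b j)) * Matrix.vandermonde b j r := by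
    ext j r
    simpa [Matrix.mul_apply] using sum_coeffZ_epoly a (b j) r
  refine mul_left_cancel₀ (Matrix.det_vandermonde_ne_zero_iff.2 hb) ?_
  rw [← hdet, ← Matrix.det_mul, ← Matrix.mul_assoc, hP, hE, Matrix.det_mul_column, hdet, mul_comm,
    Finset.prod_comm]

/-- Partitions in the `n × m` box correspond to strictly increasing `n`-tuples in `Fin (n + m)`. -/
lemma sum_partition_eq_sum_strictMono {M : Type*} [AddCommMonoid M] (n m : ℕ)
    (F : (Fin n → ℕ) → M) :
    ∑ μ ∈ (Finset.univ : Finset (Fin n → Fin (m + 1))).filter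
        (fun μ => ∀ i j : Fin n, i ≤ j → μ j ≤ μ i), F (fun l => μ l.rev + l) =
      ∑ p : Fin n → Fin (n + m) with StrictMono p, F (fun l => p l) := by
  refine Finset.sum_bij (fun μ _ l => ⟨μ l.rev + l, by omega⟩) ?_ ?_ ?_ ?_
  · intro μ hμ
    simp only [Finset.mem_filter, Finset.mem_univ, true_and] at hμ ⊢
    intro l l' h
    have h1 : (μ l.rev : ℕ) ≤ μ l'.rev := hμ _ _ (Fin.rev_le_rev.2 h.le)
    have h2 : (l : ℕ) < l' := h
    simp only [Fin.lt_def]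
    omega
  · intro μ _ ν _ h
    ext l
    simpa using congrFun h l.rev
  · intro p hp
    simp only [Finset.mem_filter, Finset.mem_univ, true_and] at hp
    have hmono : ∀ i j : Fin n, i ≤ j → (p i : ℕ) + j ≤ p j + i := by
      intro i j hij
      obtain ⟨i, hi⟩ := i
      obtain ⟨j, hj⟩ := j
      simp only [Fin.mk_le_mk] at hij
      induction j, hij using Nat.le_induction with
      | base => rfl
      | succ j hij ih =>
        have h1 := ih (by omega)
        have h2 : p ⟨j, by omega⟩ < p ⟨j + 1, hj⟩ := hp (Fin.mk_lt_mk.2 j.lt_succ_self)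
        simp only [Fin.lt_def] at h2 h1 ⊢
        omega
    have hge (i : Fin n) : (i : ℕ) ≤ p i := by
      have := hmono ⟨0, i.pos⟩ i (Fin.mk_le_mk.2 (Nat.zero_le _))
      simp only at this
      omega
    have hle (i : Fin n) : (p i : ℕ) ≤ m + i := by
      have h1 := hmono i ⟨n - 1, Nat.sub_one_lt_of_lt i.pos⟩ (Fin.mk_le_mk.2 (by omega))
      have h2 := (p ⟨n - 1, Nat.sub_one_lt_of_lt i.pos⟩).isLt
      simp only at h1
      omega
    refine ⟨fun l => ⟨p l.rev - l.rev, by have := hle l.rev; omega⟩, ?_, ?_⟩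
    · simp only [Finset.mem_filter, Finset.mem_univ, true_and]
      intro i j hij
      have h1 := hmono _ _ (Fin.rev_le_rev.2 hij)
      have h2 := hge i.rev
      have h3 := hge j.rev
      simp only [Fin.mk_le_mk]
      omega
    · ext l
      have := hge l
      simp only [Fin.rev_rev]
      omega
  · intro μ _
    rfl

lemma dual_cauchy_of_injective [IsDomain R] {m n : ℕ} (a : Fin m → R) {b : Fin n → R}
    (hb : Function.Injective b) :
    (∏ i : Fin m, ∏ j : Fin n, (1 + a i * b j)) =
    ∑ μ ∈ (Finset.univ : Finset (Fin n → Fin (m + 1))).filter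
        (fun μ => ∀ i j : Fin n, i ≤ j → μ j ≤ μ i),
      schur m (conjPartition m (fun i => (μ i : ℕ))) a * schur n (fun i => (μ i : ℕ)) b := by
  classical
  let F (p : Fin n → ℕ) : R :=
    (Matrix.of fun l i : Fin n =>
      coeffZ (epoly a : PowerSeries R) ((p l : ℤ) - (i : ℕ))).det *
    (Matrix.of fun i l : Fin n => coeffZ (hseries b) ((p l : ℤ) - (i : ℕ))).det
  rw [← det_hseries_mul_epoly a hb, Matrix.det_mul_eq_sum_strictMono]
  trans ∑ p : Fin n → Fin (n + m) with StrictMono p, F (fun l => p l)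
  · exact Finset.sum_congr rfl fun p _ => mul_comm _ _
  rw [← sum_partition_eq_sum_strictMono]
  refine Finset.sum_congr rfl fun μ hμ => ?_
  simp only [Finset.mem_filter, Finset.mem_univ, true_and] at hμ
  rw [schur_conjPartition (fun i j h => hμ i j h) (fun i => Nat.lt_succ_iff.1 (μ i).isLt),
    schur_eq_det_rev]

end Cauchy

section Map

variable {R S : Type*} [CommRing R] [CommRing S]

lemma map_hpolyZ (φ : R →+* S) (n : ℕ) (k : ℤ) (x : Fin n → R) :
    φ (hpolyZ n k x) = hpolyZ n k (φ ∘ x) := by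
  simp [hpolyZ, hpoly, apply_ite φ]

lemma map_schur (φ : R →+* S) (n : ℕ) (μ : Fin n → ℕ) (x : Fin n → R) :
    φ (schur n μ x) = schur n μ (φ ∘ x) := by
  rw [schur, schur, RingHom.map_det]
  congr 1
  ext i j
  exact map_hpolyZ φ n _ x

end Map

/-- dual Cauchy identity:
`∏_{i=1}^m ∏_{j=1}^n (1 + a_i b_j) = Σ_{μ ⊆ m×n rectangle} s_{μ'}(a) s_μ(b)`,
the sum being over partitions `μ` with at most `n` parts, each of size at most `m`. -/
theorem dual_cauchy_identity (m n : ℕ) (a : Fin m → ℝ) (b : Fin n → ℝ) :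
    (∏ i : Fin m, ∏ j : Fin n, (1 + a i * b j)) =
    ∑ μ ∈ (Finset.univ : Finset (Fin n → Fin (m + 1))).filter
        (fun μ => ∀ i j : Fin n, i ≤ j → μ j ≤ μ i),
      schur m (conjPartition m (fun i => (μ i : ℕ))) a * schur n (fun i => (μ i : ℕ)) b := by
  let φ : MvPolynomial (Fin m ⊕ Fin n) ℤ →+* ℝ :=
    (MvPolynomial.aeval (Sum.elim a b)).toRingHom
  have h := congrArg φ (dual_cauchy_of_injective
    (fun i : Fin m => (MvPolynomial.X (Sum.inl i) : MvPolynomial (Fin m ⊕ Fin n) ℤ))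
    (b := fun j : Fin n => MvPolynomial.X (Sum.inr j))
    ((MvPolynomial.X_injective).comp Sum.inr_injective))
  have ha : (φ ∘ fun i : Fin m => MvPolynomial.X (Sum.inl i)) = a := by
    ext i
    simp [φ]
  have hb : (φ ∘ fun j : Fin n => MvPolynomial.X (Sum.inr j)) = b := by
    ext j
    simp [φ]
  simp only [map_prod, map_sum, map_mul, map_schur, ha, hb, map_add, map_one] at h
  simpa [φ] using h
end

section
/- Stembridge's Pfaffian expansion: for 2l×2l antisymmetric matrices A and B, Pf(A + B) = Σ_{S ⊆ {1,…,2l}, |S| even} (-1)^{Σ_{j∈S} j - |S|/2} Pf_S(A) · Pf_{S̄}(B), where Pf_S(A) denotes the Pfaffian of the submatrix of A with rows and columns indexed by S, and S̄ is the complement of S. -/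
open Finset

/-- The first element of the `i`-th pair in `Fin (2*n)`. -/
def pairLo {n : ℕ} (i : Fin n) : Fin (2 * n) := ⟨2 * i.1, by have := i.isLt; omega⟩

/-- The second element of the `i`-th pair in `Fin (2*n)`. -/
def pairHi {n : ℕ} (i : Fin n) : Fin (2 * n) := ⟨2 * i.1 + 1, by have := i.isLt; omega⟩

/-- The Pfaffian of a `2n × 2n` matrix, defined as the sum over perfect matchings
(encoded as permutations in canonical form) of the signed product of entries. -/
def pf {n : ℕ} {R : Type*} [CommRing R] (A : Matrix (Fin (2 * n)) (Fin (2 * n)) R) : R :=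
  ∑ σ ∈ Finset.univ.filter
      (fun σ : Equiv.Perm (Fin (2 * n)) =>
        (∀ i : Fin n, σ (pairLo i) < σ (pairHi i)) ∧
        ∀ i j : Fin n, i < j → σ (pairLo i) < σ (pairLo j)),
    (Equiv.Perm.sign σ : ℤ) • ∏ i : Fin n, A (σ (pairLo i)) (σ (pairHi i))

/-- The Pfaffian of the submatrix of `A` with rows and columns indexed by the (even-sized)
subset `S`, taken in increasing order. -/
def pfSub {N : ℕ} {R : Type*} [CommRing R] (A : Matrix (Fin N) (Fin N) R)
    (S : Finset (Fin N)) : R :=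
  pf (Matrix.of fun i j : Fin (2 * (S.card / 2)) =>
    A (S.orderEmbOfFin rfl (Fin.castLE (by omega) i))
      (S.orderEmbOfFin rfl (Fin.castLE (by omega) j)))

/-- Expansion of the Pfaffian along the first row. -/
theorem pf_succ {n : ℕ} {R : Type*} [CommRing R]
    (A : Matrix (Fin (2 * (n + 1))) (Fin (2 * (n + 1))) R) :
    pf A = ∑ j : Fin (2 * n + 1), (-1) ^ (j : ℕ) * A (0 : Fin (2 * n + 2)) j.succ *
      pf (A.submatrix (fun k : Fin (2 * n) => (j.succAbove k).succ)
        (fun k : Fin (2 * n) => (j.succAbove k).succ)) := by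
  let g : (Σ _ : Fin (2 * n + 1), Equiv.Perm (Fin (2 * n))) → Equiv.Perm (Fin (2 * n + 2)) :=
    fun p => Equiv.Perm.decomposeFin.symm
      (0, p.1.cycleRange.symm * Equiv.Perm.decomposeFin.symm (0, p.2))
  have g_zero (p) : g p 0 = 0 := by simp [g]
  have g_one (p) : g p 1 = p.1.succ := by
    have h : (1 : Fin (2 * n + 2)) = Fin.succ 0 := rfl
    simp only [g, h, Equiv.Perm.decomposeFin_symm_apply_succ]
    simp
  have g_succ (p) (k : Fin (2 * n)) : g p k.succ.succ = (p.1.succAbove (p.2 k)).succ := by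
    simp only [g, Equiv.Perm.decomposeFin_symm_apply_succ]
    simp
  have lo_zero : (pairLo (0 : Fin (n + 1)) : Fin (2 * n + 2)) = 0 := rfl
  have hi_zero : (pairHi (0 : Fin (n + 1)) : Fin (2 * n + 2)) = 1 := rfl
  have lo_succ (i : Fin n) : (pairLo i.succ : Fin (2 * n + 2)) = (pairLo i).succ.succ := rfl
  have hi_succ (i : Fin n) : (pairHi i.succ : Fin (2 * n + 2)) = (pairHi i).succ.succ := rfl
  have canon (p) : ((∀ i : Fin (n + 1), g p (pairLo i) < g p (pairHi i)) ∧
        ∀ i j : Fin (n + 1), i < j → g p (pairLo i) < g p (pairLo j)) ↔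
      ((∀ i : Fin n, p.2 (pairLo i) < p.2 (pairHi i)) ∧
        ∀ i j : Fin n, i < j → p.2 (pairLo i) < p.2 (pairLo j)) := by
    simp only [Fin.forall_fin_succ, lo_zero, hi_zero, lo_succ, hi_succ, g_zero, g_one, g_succ]
    simp [Fin.succAbove_lt_succAbove_iff]
  simp only [pf, Finset.mul_sum]
  rw [Finset.sum_sigma']
  symm
  refine Finset.sum_nbij g ?_ ?_ ?_ ?_
  · intro p hp
    simp only [Finset.mem_sigma, Finset.mem_filter, Finset.mem_univ, true_and] at hp ⊢
    exact (canon p).2 hp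
  · rintro ⟨j, τ⟩ - ⟨j', τ'⟩ - h
    have hj : j = j' := by
      have := congrArg (fun σ => σ 1) h
      simpa only [g_one, Fin.succ_inj] using this
    subst hj
    have : τ = τ' := by
      ext1 k
      have := congrArg (fun σ => σ k.succ.succ) h
      simpa only [g_succ, Fin.succ_inj, Fin.succAbove_right_inj] using this
    rw [this]
  · intro σ hσ
    simp only [Finset.coe_filter, Finset.mem_univ, true_and, Set.mem_ofPred_eq] at hσ
    change Equiv.Perm (Fin (2 * n + 2)) at σ
    have h0 : σ 0 = 0 := by
      obtain ⟨k, hk⟩ := σ.surjective 0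
      have hlo (i : Fin (n + 1)) : σ 0 ≤ σ (pairLo i) := by
        rcases Fin.eq_zero_or_eq_succ i with rfl | ⟨i, rfl⟩
        · exact le_rfl
        · exact (hσ.2 0 i.succ (Fin.succ_pos i)).le
      have hle : σ 0 ≤ σ k := by
        rcases Nat.even_or_odd' k.1 with ⟨c, hc | hc⟩
        · have : k = pairLo (⟨c, by have := k.2; omega⟩ : Fin (n + 1)) := Fin.ext hc
          rw [this]; exact hlo _
        · have : k = pairHi (⟨c, by have := k.2; omega⟩ : Fin (n + 1)) := Fin.ext hc
          rw [this]; exact (hlo _).trans (hσ.1 _).le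
      rw [hk] at hle
      exact Fin.le_zero_iff.1 hle
    have fix {m : ℕ} (σ : Equiv.Perm (Fin (m + 1))) (h : σ 0 = 0) :
        ∃ ρ, Equiv.Perm.decomposeFin.symm (0, ρ) = σ := by
      obtain ⟨⟨p, ρ⟩, rfl⟩ := Equiv.Perm.decomposeFin.symm.surjective σ
      rw [Equiv.Perm.decomposeFin_symm_apply_zero] at h
      exact ⟨ρ, by rw [h]⟩
    obtain ⟨ρ, hρ⟩ := fix σ h0
    obtain ⟨τ, hτ⟩ := fix ((ρ 0).cycleRange * ρ) (by simp)
    have hg : g ⟨ρ 0, τ⟩ = σ := by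
      simp only [g]
      rw [hτ, ← hρ, ← mul_assoc]
      congr 2
      ext1 x
      simp
    refine ⟨⟨ρ 0, τ⟩, ?_, hg⟩
    simp only [Finset.coe_sigma, Set.mem_sigma_iff, Finset.coe_filter, Finset.mem_univ, true_and,
      Finset.coe_univ, Set.mem_univ, Set.mem_ofPred_eq]
    rw [← hg] at hσ
    exact (canon _).1 hσ
  · rintro ⟨j, τ⟩ -
    have hs : Equiv.Perm.sign (g ⟨j, τ⟩) = (-1) ^ (j : ℕ) * Equiv.Perm.sign τ := by
      simp [g]
    rw [hs, Fin.prod_univ_succ]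
    simp only [lo_zero, hi_zero, lo_succ, hi_succ, g_zero, g_one, g_succ, Matrix.submatrix_apply]
    simp only [zsmul_eq_mul]
    push_cast
    ring

/-- `pfSub` may be computed with any increasing enumeration of the index set. -/
theorem pfSub_map {N n : ℕ} {R : Type*} [CommRing R] (A : Matrix (Fin N) (Fin N) R)
    (S : Finset (Fin N)) (hS : S.card = 2 * n) (f : Fin (2 * n) → Fin N) (hf : StrictMono f)
    (hfS : ∀ k, f k ∈ S) : pfSub A S = pf (A.submatrix f f) := by
  obtain rfl : n = S.card / 2 := by omega
  have hle : 2 * (S.card / 2) ≤ S.card := hS.ge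
  have : f = fun i => S.orderEmbOfFin rfl (Fin.castLE hle i) := by
    rw [Finset.orderEmbOfFin_unique hS hfS hf]
    exact (Finset.orderEmbOfFin_unique hS (fun i => Finset.orderEmbOfFin_mem ..)
      ((S.orderEmbOfFin rfl).strictMono.comp (Fin.strictMono_castLE hle))).symm
  subst this
  rfl

/-- Expansion of `pfSub A S` along the row of the least element of `S`. -/
theorem pfSub_eq_sum {N : ℕ} {R : Type*} [CommRing R] (A : Matrix (Fin N) (Fin N) R)
    (S : Finset (Fin N)) (hS : Even S.card) (m : Fin N) (hm : m ∈ S) (hmin : ∀ x ∈ S, m ≤ x) :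
    pfSub A S = ∑ j ∈ S.erase m, (-1) ^ ((S.erase m).filter (· < j)).card * A m j *
      pfSub A ((S.erase m).erase j) := by
  obtain ⟨n, hn⟩ : ∃ n, S.card = 2 * (n + 1) := by
    obtain ⟨k, hk⟩ := hS
    have := Finset.card_pos.2 ⟨m, hm⟩
    exact ⟨k - 1, by omega⟩
  let f : Fin (2 * n + 2) ↪o Fin N := S.orderEmbOfFin hn
  have hf0 : f 0 = m := by
    apply le_antisymm
    · have : m ∈ Set.range f := by
        rw [Finset.range_orderEmbOfFin]; exact hm
      obtain ⟨k, rfl⟩ := this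
      exact f.monotone (Fin.zero_le k)
    · exact hmin _ (Finset.orderEmbOfFin_mem ..)
  have himg : S.erase m = Finset.univ.map (Fin.succEmb _ |>.trans f.toEmbedding) := by
    ext x
    have : x ∈ S ↔ ∃ k, f k = x := by
      rw [← Set.mem_range, Finset.range_orderEmbOfFin]; rfl
    simp only [Finset.mem_erase, this, Finset.mem_map, Finset.mem_univ, true_and]
    constructor
    · rintro ⟨hx, k, rfl⟩
      rcases Fin.eq_zero_or_eq_succ k with rfl | ⟨i, rfl⟩
      · exact absurd hf0 hx
      · exact ⟨i, rfl⟩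
    · rintro ⟨i, rfl⟩
      refine ⟨?_, i.succ, rfl⟩
      rw [← hf0]
      exact fun h => Fin.succ_ne_zero i (f.injective h)
  rw [pfSub_map A S hn f f.strictMono (fun k => Finset.orderEmbOfFin_mem ..), pf_succ]
  have hsum (F : Fin N → R) : ∑ j ∈ S.erase m, F j = ∑ j : Fin (2 * n + 1), F (f j.succ) := by
    rw [himg, Finset.sum_map]; rfl
  rw [hsum]
  refine Finset.sum_congr rfl fun j _ => ?_
  have hcard : ((S.erase m).filter (· < f j.succ)).card = j := by
    rw [himg, Finset.filter_map, Finset.card_map]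
    have : (Finset.univ.filter ((· < f j.succ) ∘ (Fin.succEmb _ |>.trans f.toEmbedding)))
        = Finset.Iio j := by
      ext k
      simp
    rw [this, Fin.card_Iio]
  have hsubmem (k : Fin (2 * n)) : f (j.succAbove k).succ ∈ (S.erase m).erase (f j.succ) := by
    rw [Finset.mem_erase, himg]
    refine ⟨fun h => Fin.succAbove_ne j k (Fin.succ_injective _ (f.injective h)), ?_⟩
    exact Finset.mem_map_of_mem _ (Finset.mem_univ (j.succAbove k))
  have hjmem : f j.succ ∈ S.erase m := by
    rw [himg]; exact Finset.mem_map_of_mem _ (Finset.mem_univ j)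
  rw [hcard, pfSub_map A _ (n := n) _ (fun k => f (j.succAbove k).succ) _ hsubmem]
  · simp only [Matrix.submatrix_apply, hf0]
    rfl
  · rw [Finset.card_erase_of_mem hjmem, Finset.card_erase_of_mem hm, hn]
    omega
  · exact f.strictMono.comp ((Fin.strictMono_succ).comp (Fin.strictMono_succAbove j))

theorem pfSub_empty {N : ℕ} {R : Type*} [CommRing R] (A : Matrix (Fin N) (Fin N) R) :
    pfSub A ∅ = 1 := by
  rw [pfSub_map A ∅ (n := 0) rfl (fun k => k.elim0) (fun k => k.elim0) (fun k => k.elim0)]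
  simp [pf]

/-- The number of pairs `(s, t) ∈ S × T` with `t < s`. -/
def crossInv {α : Type*} [LinearOrder α] (S T : Finset α) : ℕ :=
  ∑ s ∈ S, (T.filter (· < s)).card

section CrossInv

variable {α : Type*} [LinearOrder α]

theorem crossInv_insert_left {S : Finset α} (T : Finset α) {a : α} (ha : a ∉ S) :
    crossInv (insert a S) T = (T.filter (· < a)).card + crossInv S T :=
  Finset.sum_insert ha

theorem crossInv_insert_right (S : Finset α) {T : Finset α} {a : α} (ha : a ∉ T) :
    crossInv S (insert a T) = (S.filter (a < ·)).card + crossInv S T := by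
  rw [crossInv, crossInv, Finset.card_filter, ← Finset.sum_add_distrib]
  refine Finset.sum_congr rfl fun s _ => ?_
  rw [Finset.filter_insert]
  split_ifs with h
  · rw [Finset.card_insert_of_notMem (by simp [ha]), add_comm]
  · simp

theorem card_filter_lt_insert_self (S : Finset α) (j : α) :
    ((insert j S).filter (· < j)).card = (S.filter (· < j)).card := by
  rw [Finset.filter_insert, if_neg (lt_irrefl j)]

theorem card_filter_lt_add_card_filter_gt {S : Finset α} {j : α} (hj : j ∉ S) :
    (S.filter (· < j)).card + (S.filter (j < ·)).card = S.card := by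
  rw [← Finset.card_filter_add_card_filter_not (s := S) (· < j)]
  congr 2
  refine Finset.filter_congr fun x hx => ?_
  have : x ≠ j := fun h => hj (h ▸ hx)
  rw [not_lt]
  exact ⟨le_of_lt, fun h => lt_of_le_of_ne h this.symm⟩

theorem card_filter_lt_sdiff {X S : Finset α} (hS : S ⊆ X) (j : α) :
    ((X \ S).filter (· < j)).card + (S.filter (· < j)).card = (X.filter (· < j)).card := by
  rw [← Finset.card_union_of_disjoint, ← Finset.filter_union, Finset.sdiff_union_of_subset hS]
  exact Finset.disjoint_filter_filter Finset.sdiff_disjoint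

theorem crossInv_self (S : Finset α) : 2 * crossInv S S + S.card = S.card * S.card := by
  induction S using Finset.induction_on_max with
  | empty => rfl
  | insert a S h ih =>
    have ha : a ∉ S := fun h' => lt_irrefl a (h a h')
    rw [crossInv_insert_left _ ha, crossInv_insert_right _ ha, card_filter_lt_insert_self,
      Finset.card_insert_of_notMem ha, Finset.filter_true_of_mem h,
      Finset.filter_false_of_mem (fun x hx => (h x hx).not_gt)]
    simp only [Finset.card_empty]
    linarith

end CrossInv

/-- The expansion of `Pf(A + B)` relative to an arbitrary even-sized index set `X`. -/
theorem pfSub_add {N : ℕ} {R : Type*} [CommRing R] (A B : Matrix (Fin N) (Fin N) R) (k : ℕ) :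
    ∀ X : Finset (Fin N), X.card = 2 * k → pfSub (A + B) X =
      ∑ S ∈ X.powerset.filter (fun S => Even S.card),
        (-1) ^ crossInv S (X \ S) * pfSub A S * pfSub B (X \ S) := by
  induction k with
  | zero =>
    intro X hX
    obtain rfl : X = ∅ := Finset.card_eq_zero.1 hX
    simp [Finset.filter_singleton, pfSub_empty, crossInv]
  | succ k ih =>
    intro X hX
    have hne : X.Nonempty := Finset.card_pos.1 (by omega)
    obtain ⟨m, hm, hmin⟩ : ∃ m ∈ X, ∀ x ∈ X, m ≤ x :=
      ⟨X.min' hne, X.min'_mem hne, fun x hx => X.min'_le x hx⟩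
    have hlt : ∀ x ∈ X.erase m, m < x := fun x hx =>
      lt_of_le_of_ne (hmin x (Finset.mem_of_mem_erase hx)) (Finset.ne_of_mem_erase hx).symm
    have hXe : Even X.card := ⟨k + 1, by omega⟩
    have key (j) (hj : j ∈ X.erase m) := ih ((X.erase m).erase j) (by
      rw [Finset.card_erase_of_mem hj, Finset.card_erase_of_mem hm, hX]; omega)
    have hleft : ∑ S ∈ (X.powerset.filter (fun S => Even S.card)).filter (m ∈ ·),
          (-1) ^ crossInv S (X \ S) * pfSub A S * pfSub B (X \ S) =
        ∑ j ∈ X.erase m,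
          ∑ S ∈ ((X.erase m).erase j).powerset.filter (fun S => Even S.card),
          (-1) ^ ((X.erase m).filter (· < j)).card * A m j *
          ((-1) ^ crossInv S ((X.erase m).erase j \ S) * pfSub A S *
            pfSub B ((X.erase m).erase j \ S)) := by
      have hexp : ∀ S ∈ (X.powerset.filter (fun S => Even S.card)).filter (m ∈ ·),
          (-1) ^ crossInv S (X \ S) * pfSub A S * pfSub B (X \ S) =
          ∑ j ∈ S.erase m, (-1) ^ crossInv S (X \ S) *
            ((-1) ^ ((S.erase m).filter (· < j)).card * A m j *
            pfSub A ((S.erase m).erase j)) * pfSub B (X \ S) := by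
        intro S hS
        simp only [Finset.mem_filter, Finset.mem_powerset] at hS
        obtain ⟨⟨hSX, hSe⟩, hmS⟩ := hS
        rw [pfSub_eq_sum A S hSe m hmS (fun x hx => hmin x (hSX hx)), Finset.mul_sum,
          Finset.sum_mul]
      rw [Finset.sum_congr rfl hexp, Finset.sum_sigma', Finset.sum_sigma']
      refine Finset.sum_bij' (fun p _ => ⟨p.2, (p.1.erase m).erase p.2⟩)
        (fun p _ => ⟨insert m (insert p.1 p.2), p.1⟩) ?_ ?_ ?_ ?_ ?_
      · rintro ⟨S, j⟩ h
        simp only [Finset.mem_sigma, Finset.mem_filter, Finset.mem_powerset] at h ⊢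
        obtain ⟨⟨⟨hSX, hSe⟩, hmS⟩, hj⟩ := h
        refine ⟨Finset.erase_subset_erase _ hSX hj,
          Finset.erase_subset_erase _ (Finset.erase_subset_erase _ hSX), ?_⟩
        rw [Finset.card_erase_of_mem hj, Finset.card_erase_of_mem hmS, Nat.sub_sub]
        exact hSe.tsub even_two
      · rintro ⟨j, S⟩ h
        simp only [Finset.mem_sigma, Finset.mem_filter, Finset.mem_powerset] at h ⊢
        obtain ⟨hj, hSX, hSe⟩ := h
        have hjS : j ∉ S := fun h => Finset.notMem_erase j _ (hSX h)
        have hmS : m ∉ insert j S := by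
          rw [Finset.mem_insert]
          rintro (rfl | h)
          · exact Finset.notMem_erase m _ hj
          · exact Finset.notMem_erase m _ (Finset.mem_of_mem_erase (hSX h))
        refine ⟨⟨⟨?_, ?_⟩, Finset.mem_insert_self _ _⟩, ?_⟩
        · refine Finset.insert_subset hm (Finset.insert_subset (Finset.mem_of_mem_erase hj) ?_)
          exact fun x hx => Finset.mem_of_mem_erase (Finset.mem_of_mem_erase (hSX hx))
        · rw [Finset.card_insert_of_notMem hmS, Finset.card_insert_of_notMem hjS]
          exact hSe.add even_two
        · rw [Finset.erase_insert hmS]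
          exact Finset.mem_insert_self _ _
      · rintro ⟨S, j⟩ h
        simp only [Finset.mem_sigma, Finset.mem_filter, Finset.mem_powerset] at h
        obtain ⟨⟨⟨hSX, hSe⟩, hmS⟩, hj⟩ := h
        simp only [Finset.insert_erase hj, Finset.insert_erase hmS]
      · rintro ⟨j, S⟩ h
        simp only [Finset.mem_sigma, Finset.mem_filter, Finset.mem_powerset] at h
        obtain ⟨hj, hSX, hSe⟩ := h
        have hjS : j ∉ S := fun h => Finset.notMem_erase j _ (hSX h)
        have hmS : m ∉ insert j S := by
          rw [Finset.mem_insert]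
          rintro (rfl | h)
          · exact Finset.notMem_erase m _ hj
          · exact Finset.notMem_erase m _ (Finset.mem_of_mem_erase (hSX h))
        simp only [Finset.erase_insert hmS, Finset.erase_insert hjS]
      · rintro ⟨S, j⟩ h
        simp only [Finset.mem_sigma, Finset.mem_filter, Finset.mem_powerset] at h
        obtain ⟨⟨⟨hSX, hSe⟩, hmS⟩, hj⟩ := h
        have hdiff : (X.erase m).erase j \ (S.erase m).erase j = X \ S := by
          ext x; simp only [Finset.mem_sdiff, Finset.mem_erase]
          have : x = m → x ∈ S := by rintro rfl; exact hmS
          have : x = j → x ∈ S := by rintro rfl; exact Finset.mem_of_mem_erase hj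
          tauto
        have hdiff' : X.erase m \ S.erase m = X \ S := by
          ext x; simp only [Finset.mem_sdiff, Finset.mem_erase]
          have : x = m → x ∈ S := by rintro rfl; exact hmS
          tauto
        have h1 := card_filter_lt_sdiff (Finset.erase_subset_erase m hSX) j
        rw [hdiff'] at h1
        have h2 : crossInv S (X \ S) =
            ((X \ S).filter (· < j)).card + crossInv ((S.erase m).erase j) (X \ S) := by
          conv_lhs => rw [← Finset.insert_erase hmS,
            crossInv_insert_left _ (Finset.notMem_erase m S), Finset.insert_erase hmS,
            ← Finset.insert_erase hj, crossInv_insert_left _ (Finset.notMem_erase j _)]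
          rw [Finset.filter_false_of_mem (fun x hx => (hmin x (Finset.sdiff_subset hx)).not_gt)]
          simp
        simp only [hdiff]
        rw [h2, ← h1, pow_add, pow_add]
        ring
    have hright : ∑ S ∈ (X.powerset.filter (fun S => Even S.card)).filter (m ∉ ·),
          (-1) ^ crossInv S (X \ S) * pfSub A S * pfSub B (X \ S) =
        ∑ j ∈ X.erase m,
          ∑ S ∈ ((X.erase m).erase j).powerset.filter (fun S => Even S.card),
          (-1) ^ ((X.erase m).filter (· < j)).card * B m j *
          ((-1) ^ crossInv S ((X.erase m).erase j \ S) * pfSub A S *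
            pfSub B ((X.erase m).erase j \ S)) := by
      have hexp : ∀ S ∈ (X.powerset.filter (fun S => Even S.card)).filter (m ∉ ·),
          (-1) ^ crossInv S (X \ S) * pfSub A S * pfSub B (X \ S) =
          ∑ j ∈ (X \ S).erase m, (-1) ^ ((X.erase m).filter (· < j)).card * B m j *
            ((-1) ^ crossInv S ((X.erase m).erase j \ S) * pfSub A S *
            pfSub B ((X.erase m).erase j \ S)) := by
        intro S hS
        simp only [Finset.mem_filter, Finset.mem_powerset] at hS
        obtain ⟨⟨hSX, hSe⟩, hmS⟩ := hS
        have hTe : Even (X \ S).card := by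
          rw [Finset.card_sdiff_of_subset hSX]; exact hXe.tsub hSe
        have hmT : m ∈ X \ S := Finset.mem_sdiff.2 ⟨hm, hmS⟩
        rw [pfSub_eq_sum B _ hTe m hmT (fun x hx => hmin x (Finset.sdiff_subset hx)),
          Finset.mul_sum]
        refine Finset.sum_congr rfl fun j hj => ?_
        have hjS : j ∉ S := (Finset.mem_sdiff.1 (Finset.mem_of_mem_erase hj)).2
        have hdiff' : X.erase m \ S = (X \ S).erase m := by
          rw [Finset.erase_sdiff_comm]
        have hdiff : (X.erase m).erase j \ S = ((X \ S).erase m).erase j := by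
          rw [Finset.erase_sdiff_comm, hdiff']
        have hSX' : S ⊆ X.erase m := Finset.subset_erase.2 ⟨hSX, hmS⟩
        have h1 := card_filter_lt_sdiff hSX' j
        rw [hdiff'] at h1
        have h2 : crossInv S (X \ S) = S.card + ((S.filter (j < ·)).card +
            crossInv S (((X \ S).erase m).erase j)) := by
          conv_lhs => rw [← Finset.insert_erase hmT,
            crossInv_insert_right _ (Finset.notMem_erase m _),
            ← Finset.insert_erase hj, crossInv_insert_right _ (Finset.notMem_erase j _)]
          rw [Finset.filter_true_of_mem (fun x hx => hlt x (hSX' hx))]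
        have h3 := card_filter_lt_add_card_filter_gt hjS
        have h4 : (-1 : R) ^ (S.filter (j < ·)).card = (-1) ^ (S.filter (· < j)).card := by
          refine neg_one_pow_congr ?_
          have := hSe
          rw [← h3, Nat.even_add] at this
          exact this.symm
        rw [hdiff, h2, ← h1, pow_add, pow_add, pow_add, hSe.neg_one_pow, h4]
        ring
      rw [Finset.sum_congr rfl hexp]
      refine Finset.sum_comm' fun S j => ?_
      simp only [Finset.mem_filter, Finset.mem_powerset, Finset.mem_erase, Finset.mem_sdiff,
        Finset.subset_erase]
      tauto
    rw [← Finset.sum_filter_add_sum_filter_not _ (m ∈ ·), hleft, hright,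
      pfSub_eq_sum _ X hXe m hm hmin, ← Finset.sum_add_distrib]
    refine Finset.sum_congr rfl fun j hj => ?_
    rw [key j hj, ← Finset.sum_add_distrib, Finset.mul_sum]
    refine Finset.sum_congr rfl fun S _ => ?_
    rw [Matrix.add_apply]
    ring

/-- Stembridge's Pfaffian expansion: for antisymmetric `2l × 2l` matrices
`A`, `B`, `Pf(A+B) = Σ_{S even} (-1)^{Σ_{j∈S} j - |S|/2} Pf_S(A) Pf_{S̄}(B)`.
(Indices in `{1,…,2l}`, so the `Fin`-indexed version uses `j+1`.) -/
theorem pf_add_expansion {R : Type*} [CommRing R] (l : ℕ)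
    (A B : Matrix (Fin (2 * l)) (Fin (2 * l)) R) (hA : Matrix.transpose A = -A) (hB : Matrix.transpose B = -B) :
    pf (A + B) =
      ∑ S ∈ (Finset.univ : Finset (Finset (Fin (2 * l)))).filter (fun S => Even S.card),
        (-1 : R) ^ ((∑ j ∈ S, ((j : ℕ) + 1)) - S.card / 2) * pfSub A S * pfSub B Sᶜ := by
  have huniv : pfSub (A + B) Finset.univ = pf (A + B) := by
    rw [pfSub_map (A + B) Finset.univ (n := l) (by simp) id strictMono_id (by simp)]
    rfl
  rw [← huniv, pfSub_add A B l _ (by simp), Finset.powerset_univ]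
  refine Finset.sum_congr rfl fun S hS => ?_
  obtain ⟨p, hp⟩ := (Finset.mem_filter.1 hS).2
  rw [← Finset.compl_eq_univ_sdiff]
  congr 2
  have h1 : crossInv S Sᶜ + crossInv S S = ∑ s ∈ S, (s : ℕ) := by
    rw [crossInv, crossInv, ← Finset.sum_add_distrib]
    refine Finset.sum_congr rfl fun s _ => ?_
    rw [Finset.compl_eq_univ_sdiff, card_filter_lt_sdiff (Finset.subset_univ S), Finset.filter_gt_eq_Iio, Fin.card_Iio]
  have h2 := crossInv_self S
  have h3 : crossInv S S + p = 2 * (p * p) := by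
    rw [hp] at h2
    nlinarith
  have h4 : ∑ j ∈ S, ((j : ℕ) + 1) - S.card / 2 = crossInv S Sᶜ + 2 * (p * p) := by
    rw [Finset.sum_add_distrib, Finset.sum_const, ← h1, smul_eq_mul, mul_one]
    omega
  rw [h4, pow_add, pow_mul]
  simp
end
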